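/- arXiv:1506.03729 — 2 statements merged into one kernel-verified Lean document; each statement's English description precedes it below -/
import Mathlib

section
/- Let k ≥ 1, let μ, ν ∈ ℝ^k have all entries positive, and let p₁, p₂ > 0. Then for every t ∈ [0,1], ∑_{x ∈ ℕ^k} min(p₁ P_μ(x), p₂ P_ν(x)) ≤ p₁^t p₂^{1−t} · exp(−∑_{i=1}^k (t μ_i + (1−t) ν_i − μ_i^t ν_i^{1−t})). Consequently, ∑_{x ∈ ℕ^k} min(p₁ P_μ(x), p₂ P_ν(x)) ≤ max(p₁, p₂) · exp(−D₊(μ, ν)). -/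
open scoped BigOperators

/-- Multivariate Poisson probability mass function on `ℕ^k` with mean vector `lam`. -/
noncomputable def poissonPMF {k : ℕ} (lam : Fin k → ℝ) (x : Fin k → ℕ) : ℝ :=
  ∏ i, lam i ^ x i * Real.exp (-lam i) / (Nat.factorial (x i))

/-- The CH-divergence `D₊(μ, ν) = max_{t ∈ [0,1]} ∑ i (t μ i + (1-t) ν i − μ i ^ t ν i ^ (1-t))`. -/
noncomputable def CHdiv {k : ℕ} (μ ν : Fin k → ℝ) : ℝ :=
  sSup ((fun t : ℝ => ∑ i, (t * μ i + (1 - t) * ν i - μ i ^ t * ν i ^ (1 - t))) ''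
    Set.Icc (0 : ℝ) 1)

/-!
The minimum of two numbers is at most any weighted geometric mean of them, so the left-hand side is
bounded by `∑ x, (p₁ P_μ(x)) ^ t * (p₂ P_ν(x)) ^ (1 - t)`. The geometric mean of two Poisson laws is
again Poisson up to normalization: it equals `exp (-D_t(μ, ν))` times the Poisson law whose mean
vector is the geometric mean of `μ` and `ν`, where `D_t` is the quantity maximized in `D₊`. The
Poisson law has mass one, which gives the bound for each `t`; a maximizer of the continuous function
`t ↦ D_t(μ, ν)` then gives the bound in terms of `D₊`.
-/

section GeometricMean

variable {a b t : ℝ}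

lemma rpow_mul_rpow_one_sub_self (ha : 0 ≤ a) (ht : t ∈ Set.Icc (0 : ℝ) 1) :
    a ^ t * a ^ (1 - t) = a := by
  rw [← Real.rpow_add_of_nonneg ha ht.1 (sub_nonneg.2 ht.2), add_sub_cancel, Real.rpow_one]

lemma min_le_rpow_mul_rpow_one_sub (ha : 0 ≤ a) (hb : 0 ≤ b) (ht : t ∈ Set.Icc (0 : ℝ) 1) :
    min a b ≤ a ^ t * b ^ (1 - t) := by
  have hmin : 0 ≤ min a b := le_min ha hb
  calc min a b = min a b ^ t * min a b ^ (1 - t) := (rpow_mul_rpow_one_sub_self hmin ht).symm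
    _ ≤ a ^ t * b ^ (1 - t) := by
      gcongr
      exacts [ht.1, min_le_left a b, sub_nonneg.2 ht.2, min_le_right a b]

lemma rpow_mul_rpow_one_sub_le_max (ha : 0 ≤ a) (hb : 0 ≤ b) (ht : t ∈ Set.Icc (0 : ℝ) 1) :
    a ^ t * b ^ (1 - t) ≤ max a b := by
  calc a ^ t * b ^ (1 - t) ≤ max a b ^ t * max a b ^ (1 - t) := by
        gcongr
        exacts [ht.1, le_max_left a b, sub_nonneg.2 ht.2, le_max_right a b]
    _ = max a b := rpow_mul_rpow_one_sub_self (le_max_of_le_left ha) ht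

lemma tsum_min_le_tsum_rpow_mul_rpow_one_sub {ι : Type*} {f g : ι → ℝ} (hf : ∀ x, 0 ≤ f x)
    (hg : ∀ x, 0 ≤ g x) (ht : t ∈ Set.Icc (0 : ℝ) 1)
    (hfg : Summable fun x ↦ f x ^ t * g x ^ (1 - t)) :
    ∑' x, min (f x) (g x) ≤ ∑' x, f x ^ t * g x ^ (1 - t) := by
  have hle x : min (f x) (g x) ≤ f x ^ t * g x ^ (1 - t) :=
    min_le_rpow_mul_rpow_one_sub (hf x) (hg x) ht
  exact (hfg.of_nonneg_of_le (fun x ↦ le_min (hf x) (hg x)) hle).tsum_le_tsum hle hfg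

end GeometricMean

lemma hasSum_prod_pi {𝕜 : Type*} [RCLike 𝕜] {n : ℕ} {α : Fin n → Type*} {f : ∀ i, α i → 𝕜}
    {a : Fin n → 𝕜} (hf : ∀ i, HasSum (f i) (a i)) :
    HasSum (fun x : ∀ i, α i ↦ ∏ i, f i (x i)) (∏ i, a i) := by
  induction n with
  | zero => simp
  | succ n ih =>
    have htail := ih fun i ↦ hf i.succ
    have hsummable := summable_mul_of_summable_norm (hf 0).summable.norm htail.summable.norm
    rw [← (Fin.consEquiv α).hasSum_iff, Fin.prod_univ_succ]
    simpa [Function.comp_def, Fin.prod_univ_succ] using (hf 0).mul htail hsummable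

section Poisson

variable {k : ℕ} {μ ν : Fin k → ℝ} {t : ℝ}

lemma poissonPMF_nonneg (hμ : ∀ i, 0 ≤ μ i) (x : Fin k → ℕ) : 0 ≤ poissonPMF μ x :=
  Finset.prod_nonneg fun i _ ↦ by have := hμ i; positivity

lemma hasSum_poissonPMF (hμ : ∀ i, 0 ≤ μ i) : HasSum (poissonPMF μ) 1 := by
  have hcoord i : HasSum (fun n : ℕ ↦ μ i ^ n * Real.exp (-μ i) / n.factorial) 1 := by
    simpa only [mul_comm, Real.coe_toNNReal _ (hμ i)] using
      ProbabilityTheory.hasSum_one_poissonMeasure (μ i).toNNReal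
  simpa only [Finset.prod_const_one, ← poissonPMF.eq_def] using hasSum_prod_pi hcoord

/-- The quantity `D_t(μ, ν)` whose maximum over `t ∈ [0, 1]` is the CH-divergence `CHdiv μ ν`. -/
noncomputable def CHdivAt (μ ν : Fin k → ℝ) (t : ℝ) : ℝ :=
  ∑ i, (t * μ i + (1 - t) * ν i - μ i ^ t * ν i ^ (1 - t))

lemma continuous_CHdivAt (hμ : ∀ i, μ i ≠ 0) (hν : ∀ i, ν i ≠ 0) : Continuous (CHdivAt μ ν) := by
  refine continuous_finsetSum _ fun i _ ↦ ?_
  have hμ_rpow : Continuous fun t : ℝ ↦ μ i ^ t := Real.continuous_const_rpow (hμ i)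
  have hν_rpow : Continuous fun t : ℝ ↦ ν i ^ (1 - t) :=
    (Real.continuous_const_rpow (hν i)).comp (continuous_sub_left 1)
  fun_prop

lemma exists_CHdiv_eq_CHdivAt (hμ : ∀ i, μ i ≠ 0) (hν : ∀ i, ν i ≠ 0) :
    ∃ t ∈ Set.Icc (0 : ℝ) 1, CHdiv μ ν = CHdivAt μ ν t :=
  isCompact_Icc.exists_sSup_image_eq (Set.nonempty_Icc.2 zero_le_one)
    (continuous_CHdivAt hμ hν).continuousOn

lemma poisson_rpow_mul_rpow_one_sub {a b : ℝ} (ha : 0 ≤ a) (hb : 0 ≤ b) (t : ℝ) (n : ℕ) :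
    (a ^ n * Real.exp (-a) / n.factorial) ^ t * (b ^ n * Real.exp (-b) / n.factorial) ^ (1 - t) =
      Real.exp (-(t * a + (1 - t) * b - a ^ t * b ^ (1 - t))) *
        ((a ^ t * b ^ (1 - t)) ^ n * Real.exp (-(a ^ t * b ^ (1 - t))) / n.factorial) := by
  have hpow : (a ^ n) ^ t * (b ^ n) ^ (1 - t) = (a ^ t * b ^ (1 - t)) ^ n := by
    rw [mul_pow, Real.rpow_pow_comm ha, Real.rpow_pow_comm hb]
  have hexp : Real.exp (-a) ^ t * Real.exp (-b) ^ (1 - t) =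
      Real.exp (-(t * a + (1 - t) * b - a ^ t * b ^ (1 - t))) *
        Real.exp (-(a ^ t * b ^ (1 - t))) := by
    rw [← Real.exp_mul, ← Real.exp_mul, ← Real.exp_add, ← Real.exp_add]
    ring_nf
  have hfactorial : (n.factorial : ℝ) ^ t * (n.factorial : ℝ) ^ (1 - t) = n.factorial := by
    rw [← Real.rpow_add (by positivity), add_sub_cancel, Real.rpow_one]
  calc
    _ = (a ^ n) ^ t * (b ^ n) ^ (1 - t) * (Real.exp (-a) ^ t * Real.exp (-b) ^ (1 - t)) /
          ((n.factorial : ℝ) ^ t * (n.factorial : ℝ) ^ (1 - t)) := by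
      rw [Real.div_rpow (by positivity) (by positivity), Real.div_rpow (by positivity)
        (by positivity), Real.mul_rpow (by positivity) (by positivity),
        Real.mul_rpow (by positivity) (by positivity), div_mul_div_comm, mul_mul_mul_comm]
    _ = _ := by
      rw [hpow, hexp, hfactorial]
      ring

lemma poissonPMF_rpow_mul_rpow_one_sub (hμ : ∀ i, 0 ≤ μ i) (hν : ∀ i, 0 ≤ ν i) (t : ℝ)
    (x : Fin k → ℕ) :
    poissonPMF μ x ^ t * poissonPMF ν x ^ (1 - t) =
      Real.exp (-CHdivAt μ ν t) * poissonPMF (fun i ↦ μ i ^ t * ν i ^ (1 - t)) x := by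
  have hfactor {lam : Fin k → ℝ} (hlam : ∀ i, 0 ≤ lam i) :
      ∀ i ∈ Finset.univ, 0 ≤ lam i ^ x i * Real.exp (-lam i) / (x i).factorial :=
    fun i _ ↦ by have := hlam i; positivity
  simp only [poissonPMF, CHdivAt]
  rw [← Real.finsetProd_rpow _ _ (hfactor hμ), ← Real.finsetProd_rpow _ _ (hfactor hν),
    ← Finset.prod_mul_distrib, ← Finset.sum_neg_distrib, Real.exp_sum, ← Finset.prod_mul_distrib]
  exact Finset.prod_congr rfl fun i _ ↦ poisson_rpow_mul_rpow_one_sub (hμ i) (hν i) t (x i)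

lemma hasSum_rpow_mul_rpow_one_sub_poissonPMF (hμ : ∀ i, 0 ≤ μ i) (hν : ∀ i, 0 ≤ ν i) {p₁ p₂ : ℝ}
    (hp₁ : 0 ≤ p₁) (hp₂ : 0 ≤ p₂) (t : ℝ) :
    HasSum (fun x ↦ (p₁ * poissonPMF μ x) ^ t * (p₂ * poissonPMF ν x) ^ (1 - t))
      (p₁ ^ t * p₂ ^ (1 - t) * Real.exp (-CHdivAt μ ν t)) := by
  have hmean i : 0 ≤ μ i ^ t * ν i ^ (1 - t) :=
    mul_nonneg (Real.rpow_nonneg (hμ i) _) (Real.rpow_nonneg (hν i) _)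
  have hterm x : (p₁ * poissonPMF μ x) ^ t * (p₂ * poissonPMF ν x) ^ (1 - t) =
      p₁ ^ t * p₂ ^ (1 - t) * Real.exp (-CHdivAt μ ν t) *
        poissonPMF (fun i ↦ μ i ^ t * ν i ^ (1 - t)) x := by
    rw [Real.mul_rpow hp₁ (poissonPMF_nonneg hμ x), Real.mul_rpow hp₂ (poissonPMF_nonneg hν x),
      mul_mul_mul_comm, poissonPMF_rpow_mul_rpow_one_sub hμ hν, mul_assoc (p₁ ^ t * p₂ ^ (1 - t))]
  simpa only [hterm, mul_one] using
    (hasSum_poissonPMF hmean).mul_left (p₁ ^ t * p₂ ^ (1 - t) * Real.exp (-CHdivAt μ ν t))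

lemma tsum_min_poissonPMF_le_exp_neg_CHdivAt (hμ : ∀ i, 0 ≤ μ i) (hν : ∀ i, 0 ≤ ν i) {p₁ p₂ : ℝ}
    (hp₁ : 0 ≤ p₁) (hp₂ : 0 ≤ p₂) (ht : t ∈ Set.Icc (0 : ℝ) 1) :
    ∑' x, min (p₁ * poissonPMF μ x) (p₂ * poissonPMF ν x) ≤
      p₁ ^ t * p₂ ^ (1 - t) * Real.exp (-CHdivAt μ ν t) := by
  have hsum := hasSum_rpow_mul_rpow_one_sub_poissonPMF hμ hν hp₁ hp₂ t
  rw [← hsum.tsum_eq]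
  exact tsum_min_le_tsum_rpow_mul_rpow_one_sub
    (fun x ↦ mul_nonneg hp₁ (poissonPMF_nonneg hμ x))
    (fun x ↦ mul_nonneg hp₂ (poissonPMF_nonneg hν x)) ht hsum.summable

end Poisson

theorem statement_3 (k : ℕ) (hk : 1 ≤ k) (μ ν : Fin k → ℝ)
    (hμ : ∀ i, 0 < μ i) (hν : ∀ i, 0 < ν i)
    (p₁ p₂ : ℝ) (hp₁ : 0 < p₁) (hp₂ : 0 < p₂) :
    (∀ t ∈ Set.Icc (0 : ℝ) 1,
      ∑' x : Fin k → ℕ, min (p₁ * poissonPMF μ x) (p₂ * poissonPMF ν x)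
        ≤ p₁ ^ t * p₂ ^ (1 - t) *
            Real.exp (-∑ i, (t * μ i + (1 - t) * ν i - μ i ^ t * ν i ^ (1 - t)))) ∧
    ∑' x : Fin k → ℕ, min (p₁ * poissonPMF μ x) (p₂ * poissonPMF ν x)
      ≤ max p₁ p₂ * Real.exp (-CHdiv μ ν) := by
  have hbound t (ht : t ∈ Set.Icc (0 : ℝ) 1) :=
    tsum_min_poissonPMF_le_exp_neg_CHdivAt (fun i ↦ (hμ i).le) (fun i ↦ (hν i).le) hp₁.le hp₂.le ht
  refine ⟨hbound, ?_⟩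
  obtain ⟨t, ht, hCHdiv⟩ := exists_CHdiv_eq_CHdivAt (fun i ↦ (hμ i).ne') (fun i ↦ (hν i).ne')
  calc ∑' x, min (p₁ * poissonPMF μ x) (p₂ * poissonPMF ν x)
      ≤ p₁ ^ t * p₂ ^ (1 - t) * Real.exp (-CHdivAt μ ν t) := hbound t ht
    _ ≤ max p₁ p₂ * Real.exp (-CHdiv μ ν) := by
      rw [hCHdiv]
      gcongr
      exact rpow_mul_rpow_one_sub_le_max hp₁.le hp₂.le ht
end

section
/- Let X be a countable set, k ≥ 2, let P₁,...,P_k : X → [0,1] be probability mass functions on X, let p₁,...,p_k > 0 with ∑_{j=1}^k p_j = 1, and let A, B be disjoint nonempty subsets of {1,...,k}. Set S = ∑_{x ∈ X} ∑_{i ∈ A} ∑_{j ∈ B} min(p_i P_i(x), p_j P_j(x)) and P̃_e = ∑_{x ∈ X} min(∑_{i ∈ A} p_i P_i(x), ∑_{j ∈ B} p_j P_j(x)). Then S/(|A|·|B|) ≤ P̃_e ≤ S. -/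
open scoped BigOperators

/-!
Both bounds hold pointwise in `x`. For the upper one, truncation `t ↦ min t c` with `0 ≤ c` is
subadditive on nonnegative `t`, so a minimum of two sums is at most the sum of the pairwise minima.
For the lower one, each of the `|A| * |B|` pairwise minima is at most the minimum of the two sums.
-/

section Pointwise

variable {ι κ M : Type*} [AddCommMonoid M] [LinearOrder M] [IsOrderedAddMonoid M]
  {s : Finset ι} {t : Finset κ} {a : ι → M} {b : κ → M}

lemma min_add_le_min_add_min {u v c : M} (hu : 0 ≤ u) (hv : 0 ≤ v) (hc : 0 ≤ c) :
    min (u + v) c ≤ min u c + min v c := by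
  rcases le_total c u with hcu | huc
  · rw [min_eq_right hcu]
    exact (min_le_right _ _).trans (le_add_of_nonneg_right (le_min hv hc))
  · rw [min_eq_left huc, ← min_add_add_left]
    exact min_le_min_left _ (le_add_of_nonneg_left hu)

lemma min_sum_le_sum_min {c : M} (ha : ∀ i ∈ s, 0 ≤ a i) (hc : 0 ≤ c) :
    min (∑ i ∈ s, a i) c ≤ ∑ i ∈ s, min (a i) c :=
  Finset.le_sum_of_subadditive_on_pred (min · c) (0 ≤ ·) (min_le_left _ _)
    (fun _ _ hu hv ↦ min_add_le_min_add_min hu hv hc) (fun _ _ ↦ add_nonneg) a ha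

lemma min_sum_sum_le_sum_sum_min (ha : ∀ i ∈ s, 0 ≤ a i) (hb : ∀ j ∈ t, 0 ≤ b j) :
    min (∑ i ∈ s, a i) (∑ j ∈ t, b j) ≤ ∑ i ∈ s, ∑ j ∈ t, min (a i) (b j) :=
  calc
    min (∑ i ∈ s, a i) (∑ j ∈ t, b j) ≤ ∑ i ∈ s, min (a i) (∑ j ∈ t, b j) :=
      min_sum_le_sum_min ha (Finset.sum_nonneg hb)
    _ ≤ ∑ i ∈ s, ∑ j ∈ t, min (a i) (b j) := Finset.sum_le_sum fun i hi ↦ by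
      simpa only [min_comm (a i)] using min_sum_le_sum_min hb (ha i hi)

lemma sum_sum_min_le_card_mul_card_nsmul_min (ha : ∀ i ∈ s, 0 ≤ a i) (hb : ∀ j ∈ t, 0 ≤ b j) :
    ∑ i ∈ s, ∑ j ∈ t, min (a i) (b j) ≤
      (s.card * t.card) • min (∑ i ∈ s, a i) (∑ j ∈ t, b j) := by
  rw [← Finset.sum_product', ← Finset.card_product]
  refine Finset.sum_le_card_nsmul _ _ _ fun ij hij ↦ ?_
  obtain ⟨hi, hj⟩ := Finset.mem_product.1 hij
  exact min_le_min (Finset.single_le_sum ha hi) (Finset.single_le_sum hb hj)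

end Pointwise

lemma summable_of_tsum_ne_zero {X M : Type*} [AddCommMonoid M] [TopologicalSpace M] {f : X → M}
    (hf : ∑' x, f x ≠ 0) : Summable f :=
  not_imp_comm.1 tsum_eq_zero_of_not_summable hf

lemma summable_min_of_nonneg {X : Type*} {f g : X → ℝ} (hf : ∀ x, 0 ≤ f x) (hg : ∀ x, 0 ≤ g x)
    (hfs : Summable f) : Summable fun x ↦ min (f x) (g x) :=
  hfs.of_nonneg_of_le (fun x ↦ le_min (hf x) (hg x)) fun _ ↦ min_le_left _ _

theorem statement_9_general {ι κ X : Type*} {A : Finset ι} {B : Finset κ}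
    {f : ι → X → ℝ} {g : κ → X → ℝ} (hf : ∀ i ∈ A, ∀ x, 0 ≤ f i x) (hg : ∀ j ∈ B, ∀ x, 0 ≤ g j x)
    (hfs : ∀ i ∈ A, Summable (f i)) (hA : A.Nonempty) (hB : B.Nonempty) :
    (∑' x, ∑ i ∈ A, ∑ j ∈ B, min (f i x) (g j x)) / ((A.card : ℝ) * B.card)
        ≤ ∑' x, min (∑ i ∈ A, f i x) (∑ j ∈ B, g j x) ∧
      ∑' x, min (∑ i ∈ A, f i x) (∑ j ∈ B, g j x)
        ≤ ∑' x, ∑ i ∈ A, ∑ j ∈ B, min (f i x) (g j x) := by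
  have pairwise_summable : Summable fun x ↦ ∑ i ∈ A, ∑ j ∈ B, min (f i x) (g j x) :=
    summable_sum fun i hi ↦ summable_sum fun j hj ↦
      summable_min_of_nonneg (hf i hi) (hg j hj) (hfs i hi)
  have min_summable : Summable fun x ↦ min (∑ i ∈ A, f i x) (∑ j ∈ B, g j x) :=
    summable_min_of_nonneg (fun x ↦ Finset.sum_nonneg fun i hi ↦ hf i hi x)
      (fun x ↦ Finset.sum_nonneg fun j hj ↦ hg j hj x) (summable_sum hfs)
  constructor
  · have card_pos : (0 : ℝ) < A.card * B.card := by
      exact_mod_cast Nat.mul_pos hA.card_pos hB.card_pos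
    rw [div_le_iff₀' card_pos, ← tsum_mul_left]
    refine pairwise_summable.tsum_le_tsum (fun x ↦ ?_) (min_summable.mul_left _)
    simpa only [nsmul_eq_mul, Nat.cast_mul] using
      sum_sum_min_le_card_mul_card_nsmul_min (fun i hi ↦ hf i hi x) (fun j hj ↦ hg j hj x)
  · exact min_summable.tsum_le_tsum (fun x ↦ min_sum_sum_le_sum_sum_min
      (fun i hi ↦ hf i hi x) (fun j hj ↦ hg j hj x)) pairwise_summable

theorem statement_9 (X : Type*) [Countable X] (k : ℕ) (hk : 2 ≤ k)
    (P : Fin k → X → ℝ) (hP0 : ∀ j x, 0 ≤ P j x) (hP1 : ∀ j x, P j x ≤ 1)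
    (hPsum : ∀ j, ∑' x, P j x = 1)
    (p : Fin k → ℝ) (hp : ∀ j, 0 < p j) (hpsum : ∑ j, p j = 1)
    (A B : Finset (Fin k)) (hAB : Disjoint A B) (hA : A.Nonempty) (hB : B.Nonempty) :
    (∑' x, ∑ i ∈ A, ∑ j ∈ B, min (p i * P i x) (p j * P j x)) / ((A.card : ℝ) * B.card)
        ≤ ∑' x, min (∑ i ∈ A, p i * P i x) (∑ j ∈ B, p j * P j x) ∧
      ∑' x, min (∑ i ∈ A, p i * P i x) (∑ j ∈ B, p j * P j x)
        ≤ ∑' x, ∑ i ∈ A, ∑ j ∈ B, min (p i * P i x) (p j * P j x) := by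
  have weighted_nonneg (j : Fin k) (x : X) : 0 ≤ p j * P j x := mul_nonneg (hp j).le (hP0 j x)
  have P_summable (j : Fin k) : Summable (P j) := summable_of_tsum_ne_zero (by simp [hPsum j])
  exact statement_9_general (fun i _ ↦ weighted_nonneg i) (fun j _ ↦ weighted_nonneg j)
    (fun i _ ↦ (P_summable i).mul_left (p i)) hA hB
end
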